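/- Let E be the space of density operators with the trace-norm topology, W ⊆ E a nonempty open set, and A a bounded self-adjoint operator such that Tr(ρA) = k for all ρ ∈ W, where k is a real constant. Then A = k·I. -/

import Mathlib

open scoped InnerProductSpace

variable {H : Type*} [NormedAddCommGroup H] [InnerProductSpace ℂ H] [CompleteSpace H]

/-- `ζ` is orthonormal at all indices where the coefficient `l` is nonzero. -/
def OrthonormalOnSupport (l : ℕ → ℝ) (ζ : ℕ → H) : Prop :=
  ∀ m n, l m ≠ 0 → l n ≠ 0 → ⟪ζ m, ζ n⟫_ℂ = if m = n then 1 else 0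

/-- The diagonal operator `∑ₙ lₙ ⟨·, ζₙ⟩ ζₙ` applied to `x`. -/
noncomputable def diagApply (l : ℕ → ℝ) (ζ : ℕ → H) (x : H) : H :=
  ∑' n, ((l n : ℂ) * ⟪ζ n, x⟫_ℂ) • ζ n

/-- `(p, ζ)` is the canonical (diagonal) representation of a density operator:
`ρ = ∑ₙ pₙ ⟨·, ζₙ⟩ ζₙ` with `pₙ ≥ 0`, `∑ pₙ = 1` and `{ζₙ}` orthonormal. -/
def IsDensityRep (p : ℕ → ℝ) (ζ : ℕ → H) : Prop :=
  (∀ n, 0 ≤ p n) ∧ Summable p ∧ (∑' n, p n) = 1 ∧ OrthonormalOnSupport p ζ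

/-- `(m, η)` is a canonical (diagonal) representation of the self-adjoint trace-class
difference `σ - ρ` of the operators represented by `(q, ξ)` and `(p, ζ)`; its trace norm is
`∑ₙ |mₙ|`. -/
def IsDiffRep (q : ℕ → ℝ) (ξ : ℕ → H) (p : ℕ → ℝ) (ζ : ℕ → H)
    (m : ℕ → ℝ) (η : ℕ → H) : Prop :=
  (Summable fun n => |m n|) ∧ OrthonormalOnSupport m η ∧
    ∀ x : H, diagApply q ξ x - diagApply p ζ x = diagApply m η x

/-- The trace `Tr(ρ A) = ∑ₙ pₙ ⟨A ζₙ, ζₙ⟩` (real, since `A` is self-adjoint) of `ρ A`,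
for `ρ` given by the density representation `(p, ζ)`. -/
noncomputable def trFor (A : H →L[ℂ] H) (p : ℕ → ℝ) (ζ : ℕ → H) : ℝ :=
  ∑' n, p n * (⟪A (ζ n), ζ n⟫_ℂ).re

/-
Density operators form a convex set on which the trace against `A` is affine. Mixing `ρ₀` with a
pure state `|x⟩⟨x|` at weight `t` gives `(1 - t) ρ₀ + t |x⟩⟨x|`, at trace-norm distance at most `2t`
from `ρ₀`; for small `t` it lies in the ball, so `(1 - t) k + t ⟨A x, x⟩ = k`, that is
`⟨A x, x⟩ = k` for every unit vector `x`, and a self-adjoint operator is determined by its quadratic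
form. The work lies in diagonalizing the mixture by the spectral theorem for compact operators:
evaluating `Tr (∑ⱼ cⱼ ⟨vⱼ, ·⟩ vⱼ A)` in an orthonormal eigenbasis shows that the trace does not
depend on the decomposition and that the trace norm is at most `∑ⱼ |cⱼ| ‖vⱼ‖²`.
-/

open InnerProductSpace

section Spectral

universe u v w

variable {𝕜 : Type u} {E : Type v} [RCLike 𝕜] [NormedAddCommGroup E] [InnerProductSpace 𝕜 E]
  [CompleteSpace E]

theorem exists_hilbertBasis_of_orthogonalFamily {κ : Type w} {V : κ → Submodule 𝕜 E}
    [∀ k, CompleteSpace (V k)] (hV : OrthogonalFamily 𝕜 (fun k => V k) fun k => (V k).subtypeₗᵢ)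
    (hbot : (⨆ k, V k)ᗮ = ⊥) :
    ∃ (ι : Type max w v) (b : HilbertBasis ι 𝕜 E), ∀ i, ∃ k, b i ∈ V k := by
  choose s B _ using fun k => exists_hilbertBasis 𝕜 (V k)
  let v (i : Σ k, s k) : E := B i.1 i.2
  have hv : Orthonormal 𝕜 v := hV.orthonormal_sigma_orthonormal fun k => (B k).orthonormal
  have hspan : (Submodule.span 𝕜 (Set.range v))ᗮ = ⊥ := by
    refine eq_bot_mono (fun y hy => ?_) hbot
    rw [← Submodule.iInf_orthogonal, Submodule.mem_iInf]
    intro k x hx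
    refine inner_eq_zero_symm.mp ?_
    refine (((B k).hasSum_repr ⟨x, hx⟩).mapL (innerSL 𝕜 y ∘L (V k).subtypeL)).unique ?_
    convert! hasSum_zero with j
    have hyj : ⟪y, (B k j : E)⟫_𝕜 = 0 :=
      Submodule.inner_left_of_mem_orthogonal
        (Submodule.subset_span (Set.mem_range_self (f := v) ⟨k, j⟩)) hy
    simp [hyj]
  exact ⟨_, .mkOfOrthogonalEqBot hv hspan, fun i =>
    ⟨i.1, by rw [HilbertBasis.coe_mkOfOrthogonalEqBot]; exact (B i.1 i.2).2⟩⟩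

open Module.End in
theorem exists_hilbertBasis_eigenvectors {T : E →L[𝕜] E} (hT : IsCompactOperator T)
    (hT' : T.IsSymmetric) :
    ∃ (ι : Type max u v) (b : HilbertBasis ι 𝕜 E) (l : ι → ℝ), ∀ i, T (b i) = (l i : 𝕜) • b i := by
  obtain ⟨ι, b, hb⟩ := exists_hilbertBasis_of_orthogonalFamily hT'.orthogonalFamily_eigenspaces
    (T.orthogonalComplement_iSup_eigenspaces_eq_bot hT hT')
  choose μ hμ using hb
  refine ⟨ι, b, fun i => RCLike.re (μ i), fun i => ?_⟩
  have hreal : ((RCLike.re (μ i) : ℝ) : 𝕜) = μ i :=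
    RCLike.conj_eq_iff_re.mp <| hT'.conj_eigenvalue_eq_self <|
      hasEigenvalue_of_hasEigenvector ⟨hμ i, b.orthonormal.ne_zero i⟩
  rw [hreal]
  exact mem_eigenspace_iff.mp (hμ i)

end Spectral

section RankOneSum

variable {𝕜 E ι J J' : Type*} [RCLike 𝕜] [NormedAddCommGroup E] [InnerProductSpace 𝕜 E]
  {b : HilbertBasis ι 𝕜 E} {l : ι → ℝ} {c : J → ℝ} {v : J → E} {c' : J' → ℝ} {v' : J' → E}

theorem hasSum_norm_inner_sq (b : HilbertBasis ι 𝕜 E) (x : E) :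
    HasSum (fun i => ‖⟪x, b i⟫_𝕜‖ ^ 2) (‖x‖ ^ 2) := by
  have := RCLike.hasSum_re _ (b.hasSum_inner_mul_inner x x)
  simpa only [inner_mul_symm_re_eq_norm, norm_mul, norm_inner_symm _ x, ← pow_two,
    inner_self_eq_norm_sq] using this

theorem hasSum_apply_of_eigenbasis {T : E →L[𝕜] E} (hT : ∀ i, T (b i) = (l i : 𝕜) • b i) (x : E) :
    HasSum (fun i => ((l i : 𝕜) * ⟪b i, x⟫_𝕜) • b i) (T x) := by
  simpa [hT, smul_smul, mul_comm, b.repr_apply_apply] using (b.hasSum_repr x).mapL T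

theorem summable_abs_mul_norm_inner_sq (b : HilbertBasis ι 𝕜 E)
    (h : Summable fun j => c j * ‖v j‖ ^ 2) :
    Summable fun p : J × ι => |c p.1| * ‖⟪v p.1, b p.2⟫_𝕜‖ ^ 2 := by
  have hrow (j : J) : HasSum (fun i => |c j| * ‖⟪v j, b i⟫_𝕜‖ ^ 2) (|c j| * ‖v j‖ ^ 2) :=
    (hasSum_norm_inner_sq b (v j)).mul_left _
  refine (summable_prod_of_nonneg fun p => by positivity).mpr ⟨fun j => (hrow j).summable, ?_⟩
  simpa only [(hrow _).tsum_eq, abs_mul, abs_pow, abs_norm] using h.abs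

theorem summable_mul_norm_apply_sq (h : Summable fun j => c j * ‖v j‖ ^ 2) (A : E →L[𝕜] E) :
    Summable fun j => c j * ‖A (v j)‖ ^ 2 := by
  refine .of_norm_bounded (h.abs.mul_left (‖A‖ ^ 2)) fun j => ?_
  rw [Real.norm_eq_abs, abs_mul, abs_mul, abs_pow, abs_pow, abs_norm, abs_norm, mul_left_comm,
    ← mul_pow]
  gcongr
  exact A.le_opNorm (v j)

theorem summable_mul_re_inner (h : Summable fun j => c j * ‖v j‖ ^ 2) (A : E →L[𝕜] E) :
    Summable fun j => c j * RCLike.re ⟪A (v j), v j⟫_𝕜 := by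
  refine .of_norm_bounded (h.abs.mul_left ‖A‖) fun j => ?_
  rw [Real.norm_eq_abs, abs_mul, abs_mul, abs_pow, abs_norm, mul_left_comm]
  gcongr
  calc |RCLike.re ⟪A (v j), v j⟫_𝕜| ≤ ‖A (v j)‖ * ‖v j‖ :=
        (RCLike.abs_re_le_norm _).trans (norm_inner_le_norm _ _)
    _ ≤ ‖A‖ * ‖v j‖ * ‖v j‖ := by gcongr; exact A.le_opNorm (v j)
    _ = ‖A‖ * ‖v j‖ ^ 2 := by ring

variable (𝕜) in
/-- The operator `∑ⱼ cⱼ ⟨vⱼ, ·⟩ vⱼ`, which is of trace class when `∑ⱼ |cⱼ| ‖vⱼ‖² < ∞`; the `vⱼ`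
need not be orthogonal. The sum is taken in the operator norm, with junk value `0` if it
diverges. -/
noncomputable def rankOneSum (c : J → ℝ) (v : J → E) : E →L[𝕜] E :=
  ∑' j, (c j : 𝕜) • rankOne 𝕜 (v j) (v j)

variable [CompleteSpace E]

theorem hasSum_rankOneSum (h : Summable fun j => c j * ‖v j‖ ^ 2) :
    HasSum (fun j => (c j : 𝕜) • rankOne 𝕜 (v j) (v j)) (rankOneSum 𝕜 c v) := by
  refine (Summable.of_norm ?_).hasSum
  simpa [norm_smul, pow_two] using h.norm

theorem rankOneSum_sumElim (h : Summable fun j => c j * ‖v j‖ ^ 2)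
    (h' : Summable fun j => c' j * ‖v' j‖ ^ 2) (a a' : ℝ) :
    rankOneSum 𝕜 (Sum.elim (a • c) (a' • c')) (Sum.elim v v') =
      (a : 𝕜) • rankOneSum 𝕜 c v + (a' : 𝕜) • rankOneSum 𝕜 c' v' := by
  refine HasSum.tsum_eq (HasSum.sum ?_ ?_)
  · simpa [Function.comp_def, mul_smul] using (hasSum_rankOneSum (𝕜 := 𝕜) h).const_smul (a : 𝕜)
  · simpa [Function.comp_def, mul_smul] using (hasSum_rankOneSum (𝕜 := 𝕜) h').const_smul (a' : 𝕜)

theorem isSymmetric_rankOneSum (c : J → ℝ) (v : J → E) : (rankOneSum 𝕜 c v).IsSymmetric := by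
  rw [← ContinuousLinearMap.isSelfAdjoint_iff_isSymmetric, rankOneSum, IsSelfAdjoint, tsum_star]
  simp [ContinuousLinearMap.star_eq_adjoint]

theorem isCompactOperator_rankOneSum (h : Summable fun j => c j * ‖v j‖ ^ 2) :
    IsCompactOperator (rankOneSum 𝕜 c v) := by
  have hrankOne (x y : E) : IsCompactOperator (rankOne 𝕜 x y) :=
    (isCompactOperator_of_locallyCompactSpace_rng (.toSpanSingleton 𝕜 x)).comp_clm (innerSL 𝕜 y)
  exact isCompactOperator_of_tendsto (hasSum_rankOneSum h) <| .of_forall fun s =>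
    Submodule.sum_mem (compactOperator (.id 𝕜) E E) fun j _ =>
      Submodule.smul_mem _ _ (hrankOne (v j) (v j))

theorem hasSum_rankOneSum_apply (h : Summable fun j => c j * ‖v j‖ ^ 2) (x : E) :
    HasSum (fun j => ((c j : 𝕜) * ⟪v j, x⟫_𝕜) • v j) (rankOneSum 𝕜 c v x) := by
  simpa [smul_smul] using (hasSum_rankOneSum h).mapL (ContinuousLinearMap.apply 𝕜 E x)

theorem hasSum_inner_rankOneSum (h : Summable fun j => c j * ‖v j‖ ^ 2) (x y : E) :
    HasSum (fun j => (c j : 𝕜) * (⟪x, v j⟫_𝕜 * ⟪v j, y⟫_𝕜)) ⟪x, rankOneSum 𝕜 c v y⟫_𝕜 := by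
  have := (hasSum_rankOneSum_apply (𝕜 := 𝕜) h y).mapL (innerSL 𝕜 x)
  simpa [inner_smul_right, mul_assoc, mul_comm] using this

theorem hasSum_re_inner_rankOneSum_self (h : Summable fun j => c j * ‖v j‖ ^ 2) (x : E) :
    HasSum (fun j => c j * ‖⟪v j, x⟫_𝕜‖ ^ 2) (RCLike.re ⟪x, rankOneSum 𝕜 c v x⟫_𝕜) := by
  have := RCLike.hasSum_re _ (hasSum_inner_rankOneSum (𝕜 := 𝕜) h x x)
  simpa only [RCLike.re_ofReal_mul, inner_mul_symm_re_eq_norm, norm_mul, norm_inner_symm x,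
    ← pow_two] using this

theorem re_inner_rankOneSum_nonneg (h : Summable fun j => c j * ‖v j‖ ^ 2) (hc : ∀ j, 0 ≤ c j)
    (x : E) : 0 ≤ RCLike.re ⟪x, rankOneSum 𝕜 c v x⟫_𝕜 :=
  (hasSum_re_inner_rankOneSum_self h x).nonneg fun j => mul_nonneg (hc j) (sq_nonneg _)

theorem summable_inner_mul_inner_prod (b : HilbertBasis ι 𝕜 E)
    (h : Summable fun j => c j * ‖v j‖ ^ 2) (A : E →L[𝕜] E) :
    Summable fun p : J × ι =>
      (c p.1 : 𝕜) * (⟪A (b p.2), v p.1⟫_𝕜 * ⟪v p.1, b p.2⟫_𝕜) := by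
  refine .of_norm_bounded ((summable_abs_mul_norm_inner_sq b
    (summable_mul_norm_apply_sq h A.adjoint)).add (summable_abs_mul_norm_inner_sq b h))
    fun ⟨j, i⟩ => ?_
  rw [← ContinuousLinearMap.adjoint_inner_right, norm_mul, norm_mul, RCLike.norm_ofReal, ← mul_add,
    norm_inner_symm (b i)]
  gcongr
  nlinarith [sq_nonneg (‖⟪A.adjoint (v j), b i⟫_𝕜‖ - ‖⟪v j, b i⟫_𝕜‖),
    sq_nonneg (‖⟪A.adjoint (v j), b i⟫_𝕜‖ + ‖⟪v j, b i⟫_𝕜‖)]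

-- Both sides sum the array `cⱼ ⟨A bᵢ, vⱼ⟩ ⟨vⱼ, bᵢ⟩`, by columns and by rows.
theorem hasSum_re_inner_rankOneSum (b : HilbertBasis ι 𝕜 E)
    (h : Summable fun j => c j * ‖v j‖ ^ 2) (A : E →L[𝕜] E) :
    HasSum (fun i => RCLike.re ⟪A (b i), rankOneSum 𝕜 c v (b i)⟫_𝕜)
      (∑' j, c j * RCLike.re ⟪A (v j), v j⟫_𝕜) := by
  have hF := (summable_inner_mul_inner_prod b h A).hasSum
  have hrow (j : J) : HasSum
      (fun i => (c j : 𝕜) * (⟪A (b i), v j⟫_𝕜 * ⟪v j, b i⟫_𝕜)) ((c j : 𝕜) * ⟪A (v j), v j⟫_𝕜) := by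
    simpa only [ContinuousLinearMap.adjoint_inner_right, mul_comm]
      using (b.hasSum_inner_mul_inner (v j) (A.adjoint (v j))).mul_left (c j : 𝕜)
  have hrows := RCLike.hasSum_re _ (hF.prod_fiberwise hrow)
  have hcols := RCLike.hasSum_re _ <|
    ((Equiv.prodComm ι J).hasSum_iff.mpr hF).prod_fiberwise fun i =>
      hasSum_inner_rankOneSum h (A (b i)) (b i)
  simp only [RCLike.re_ofReal_mul] at hrows
  rwa [← hrows.tsum_eq] at hcols

theorem tsum_mul_re_inner_eq_of_rankOneSum_eq (h : Summable fun j => c j * ‖v j‖ ^ 2)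
    (h' : Summable fun j => c' j * ‖v' j‖ ^ 2) (heq : rankOneSum 𝕜 c v = rankOneSum 𝕜 c' v')
    (A : E →L[𝕜] E) :
    ∑' j, c j * RCLike.re ⟪A (v j), v j⟫_𝕜 = ∑' j, c' j * RCLike.re ⟪A (v' j), v' j⟫_𝕜 := by
  obtain ⟨_, b, _⟩ := exists_hilbertBasis 𝕜 E
  have htrace := hasSum_re_inner_rankOneSum b h' A
  rw [← heq] at htrace
  exact (hasSum_re_inner_rankOneSum b h A).unique htrace

theorem hasSum_eigenvalue (h : Summable fun j => c j * ‖v j‖ ^ 2)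
    (hb : ∀ i, rankOneSum 𝕜 c v (b i) = (l i : 𝕜) • b i) (i : ι) :
    HasSum (fun j => c j * ‖⟪v j, b i⟫_𝕜‖ ^ 2) (l i) := by
  simpa [hb, inner_smul_right, b.orthonormal.norm_eq_one] using
    hasSum_re_inner_rankOneSum_self (𝕜 := 𝕜) h (b i)

theorem summable_abs_eigenvalue_and_tsum_le (h : Summable fun j => c j * ‖v j‖ ^ 2)
    (hb : ∀ i, rankOneSum 𝕜 c v (b i) = (l i : 𝕜) • b i) :
    Summable (fun i => |l i|) ∧ ∑' i, |l i| ≤ ∑' j, |c j| * ‖v j‖ ^ 2 := by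
  have habs : Summable fun j => |c j| * ‖v j‖ ^ 2 := by
    simpa only [abs_mul, abs_pow, abs_norm] using h.abs
  have hle (i : ι) : |l i| ≤ RCLike.re ⟪b i, rankOneSum 𝕜 (|c ·|) v (b i)⟫_𝕜 := by
    rw [← (hasSum_eigenvalue h hb i).tsum_eq, ← Real.norm_eq_abs]
    refine tsum_of_norm_bounded (hasSum_re_inner_rankOneSum_self habs (b i)) fun j => ?_
    rw [Real.norm_eq_abs, abs_mul, abs_sq]
  have htrace : HasSum (fun i => RCLike.re ⟪b i, rankOneSum 𝕜 (|c ·|) v (b i)⟫_𝕜)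
      (∑' j, |c j| * ‖v j‖ ^ 2) := by
    simpa only [one_apply_eq_self, inner_self_eq_norm_sq] using hasSum_re_inner_rankOneSum b habs 1
  have hsum := Summable.of_nonneg_of_le (fun i => abs_nonneg (l i)) hle htrace.summable
  exact ⟨hsum, hasSum_le hle hsum.hasSum htrace⟩

end RankOneSum

theorem hasSum_sumElim_smul {J J' X G : Type*} [AddCommGroup G] [Module ℝ G] [TopologicalSpace G]
    [ContinuousAdd G] [ContinuousConstSMul ℝ G] {c : J → ℝ} {v : J → X} {c' : J' → ℝ} {v' : J' → X}
    {g : X → G} {S S' : G} (a a' : ℝ) (h : HasSum (fun j => c j • g (v j)) S)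
    (h' : HasSum (fun j => c' j • g (v' j)) S') :
    HasSum (fun k => Sum.elim (a • c) (a' • c') k • g (Sum.elim v v' k)) (a • S + a' • S') := by
  refine .sum ?_ ?_
  · simpa [Function.comp_def, mul_smul] using h.const_smul a
  · simpa [Function.comp_def, mul_smul] using h'.const_smul a'

theorem eq_smul_one_of_forall_re_inner {𝕜 E : Type*} [RCLike 𝕜] [NormedAddCommGroup E]
    [InnerProductSpace 𝕜 E] {A : E →L[𝕜] E} (hA : A.IsSymmetric) {k : ℝ}
    (h : ∀ x, ‖x‖ = 1 → RCLike.re ⟪A x, x⟫_𝕜 = k) : A = (k : 𝕜) • 1 := by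
  have hsymm : (A - (k : 𝕜) • 1).IsSymmetric := fun x y => by
    simpa [inner_sub_left, inner_sub_right, inner_smul_left, inner_smul_right] using hA x y
  have hquad (x : E) : RCLike.re ⟪A x, x⟫_𝕜 = k * ‖x‖ ^ 2 := by
    rcases eq_or_ne x 0 with rfl | hx
    · simp
    · have hunit := h _ (norm_smul_inv_norm (𝕜 := 𝕜) hx)
      rw [← A.reApplyInnerSelf_apply, A.reApplyInnerSelf_smul, norm_inv, RCLike.norm_ofReal,
        abs_norm, inv_pow, inv_mul_eq_iff_eq_mul₀ (by simpa using hx)] at hunit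
      rw [← A.reApplyInnerSelf_apply, hunit, mul_comm]
  have hzero (x : E) : ⟪(A - (k : 𝕜) • 1) x, x⟫_𝕜 = 0 := by
    refine (hsymm.coe_re_inner_apply_self x).symm.trans ?_
    have hself : ⟪(k : 𝕜) • x, x⟫_𝕜 = (k * ‖x‖ ^ 2 : ℝ) := by
      simp [inner_smul_left, inner_self_eq_norm_sq_to_K]
    simp [inner_sub_left, hself, hquad]
  rw [← sub_eq_zero]
  exact ContinuousLinearMap.coe_injective (hsymm.inner_map_self_eq_zero.mp hzero)

theorem hasSum_extend_support {R X G ι κ : Type*} [Zero R] [Zero X] [AddCommMonoid G]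
    [TopologicalSpace G] {l : ι → R} {b : ι → X} {f : l.support → κ} (hf : f.Injective)
    {F : R → X → G} (hF : ∀ x, F 0 x = 0) {S : G} :
    HasSum (fun k => F (f.extend (l ∘ (↑)) 0 k) (f.extend (b ∘ (↑)) 0 k)) S ↔
      HasSum (fun i => F (l i) (b i)) S := by
  rw [← hf.hasSum_iff fun k hk => by rw [Function.extend_apply' _ _ _ hk]; exact hF _,
    ← hasSum_subtype_iff_of_support_subset (s := l.support)
      (Function.support_subset_iff'.mpr fun i hi => by rw [Function.notMem_support.mp hi, hF])]
  simp only [Function.comp_def, hf.extend_apply]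

theorem orthonormalOnSupport_extend {E ι : Type*} [NormedAddCommGroup E] [InnerProductSpace ℂ E]
    {l : ι → ℝ} {b : ι → E} {f : l.support → ℕ} (hb : Orthonormal ℂ b) (hf : f.Injective) :
    OrthonormalOnSupport (f.extend (l ∘ (↑)) 0) (f.extend (b ∘ (↑)) 0) := by
  have hrange {n : ℕ} (hn : f.extend (l ∘ (↑)) 0 n ≠ 0) : ∃ i, f i = n := by
    by_contra h
    exact hn (Function.extend_apply' _ _ _ h)
  intro m n hm hn
  obtain ⟨i, rfl⟩ := hrange hm
  obtain ⟨j, rfl⟩ := hrange hn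
  classical
  simpa [hf.extend_apply, hf.eq_iff, Subtype.ext_iff] using orthonormal_iff_ite.mp hb i j

theorem OrthonormalOnSupport.mul_norm_sq {E : Type*} [NormedAddCommGroup E]
    [InnerProductSpace ℂ E] {l : ℕ → ℝ} {ζ : ℕ → E} (h : OrthonormalOnSupport l ζ) (n : ℕ) :
    l n * ‖ζ n‖ ^ 2 = l n := by
  rcases eq_or_ne (l n) 0 with hn | hn
  · simp [hn]
  · have hself : ⟪ζ n, ζ n⟫_ℂ = 1 := by simpa using h n n hn hn
    rw [← inner_self_eq_norm_sq (𝕜 := ℂ), hself, RCLike.one_re, mul_one]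

theorem diagApply_eq_rankOneSum {c : ℕ → ℝ} {v : ℕ → H} (h : Summable fun n => c n * ‖v n‖ ^ 2)
    (x : H) : diagApply c v x = rankOneSum ℂ c v x :=
  (hasSum_rankOneSum_apply (𝕜 := ℂ) h x).tsum_eq

/-- `(m, η)` is a canonical (diagonal) representation `T = ∑ₙ mₙ ⟨ηₙ, ·⟩ ηₙ` of the self-adjoint
trace-class operator `T`, whose trace norm is `∑ₙ |mₙ|`. -/
def IsDiagonalRep {E : Type*} [NormedAddCommGroup E] [InnerProductSpace ℂ E] (T : E →L[ℂ] E)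
    (m : ℕ → ℝ) (η : ℕ → E) : Prop :=
  (Summable fun n => |m n|) ∧ OrthonormalOnSupport m η ∧ ∀ x, diagApply m η x = T x

theorem IsDiagonalRep.summable_mul_norm_sq {E : Type*} [NormedAddCommGroup E]
    [InnerProductSpace ℂ E] {T : E →L[ℂ] E} {m : ℕ → ℝ} {η : ℕ → E} (hT : IsDiagonalRep T m η) :
    Summable fun n => m n * ‖η n‖ ^ 2 := by
  simpa only [hT.2.1.mul_norm_sq] using hT.1.of_abs

theorem IsDiagonalRep.isDiffRep {E : Type*} [NormedAddCommGroup E] [InnerProductSpace ℂ E]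
    {S T : E →L[ℂ] E} {p q m : ℕ → ℝ} {ζ ξ η : ℕ → E} (hm : IsDiagonalRep (T - S) m η)
    (hS : IsDiagonalRep S p ζ) (hT : IsDiagonalRep T q ξ) : IsDiffRep q ξ p ζ m η :=
  ⟨hm.1, hm.2.1, fun x => by rw [hm.2.2, hS.2.2, hT.2.2, sub_apply]⟩

section DiagonalRep

variable {J : Type*} {c : J → ℝ} {v : J → H} {m : ℕ → ℝ} {η : ℕ → H}

theorem exists_isDiagonalRep (h : Summable fun j => c j * ‖v j‖ ^ 2) :
    ∃ m η, IsDiagonalRep (rankOneSum ℂ c v) m η ∧ ∑' n, |m n| ≤ ∑' j, |c j| * ‖v j‖ ^ 2 := by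
  obtain ⟨ι, b, l, hb⟩ := exists_hilbertBasis_eigenvectors
    (isCompactOperator_rankOneSum (𝕜 := ℂ) h) (isSymmetric_rankOneSum c v)
  obtain ⟨hl, hle⟩ := summable_abs_eigenvalue_and_tsum_le h hb
  have : Countable l.support := hl.of_abs.countable_support.to_subtype
  obtain ⟨f, hf⟩ := exists_injective_nat l.support
  have habs := (hasSum_extend_support (b := b) hf (F := fun a _ => |a|) (by simp)).mpr hl.hasSum
  refine ⟨f.extend (l ∘ (↑)) 0, f.extend (b ∘ (↑)) 0,
    ⟨habs.summable, orthonormalOnSupport_extend b.orthonormal hf, fun x => HasSum.tsum_eq ?_⟩,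
    habs.tsum_eq.trans_le hle⟩
  exact (hasSum_extend_support hf (F := fun a u => ((a : ℂ) * ⟪u, x⟫_ℂ) • u) (by simp)).mpr
    (hasSum_apply_of_eigenbasis hb x)

theorem IsDiagonalRep.rankOneSum_eq {T : H →L[ℂ] H} (hT : IsDiagonalRep T m η) :
    rankOneSum ℂ m η = T :=
  ContinuousLinearMap.ext fun x => by
    rw [← diagApply_eq_rankOneSum hT.summable_mul_norm_sq, hT.2.2]

theorem IsDiagonalRep.re_inner_apply_self {T : H →L[ℂ] H} (hT : IsDiagonalRep T m η) {n : ℕ}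
    (hn : m n ≠ 0) : RCLike.re ⟪η n, T (η n)⟫_ℂ = m n := by
  have hsum := hasSum_re_inner_rankOneSum_self (𝕜 := ℂ) hT.summable_mul_norm_sq (η n)
  rw [hT.rankOneSum_eq] at hsum
  refine hsum.unique ?_
  convert hasSum_single n fun j hj => ?_ using 1
  · rw [hT.2.1 n n hn hn, if_pos rfl, norm_one, one_pow, mul_one]
  · rcases eq_or_ne (m j) 0 with hmj | hmj
    · simp [hmj]
    · simp [hT.2.1 j n hmj hn, hj]

theorem IsDiagonalRep.trFor_eq (hm : IsDiagonalRep (rankOneSum ℂ c v) m η)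
    (h : Summable fun j => c j * ‖v j‖ ^ 2) (A : H →L[ℂ] H) :
    trFor A m η = ∑' j, c j * RCLike.re ⟪A (v j), v j⟫_ℂ :=
  tsum_mul_re_inner_eq_of_rankOneSum_eq hm.summable_mul_norm_sq h hm.rankOneSum_eq A

theorem IsDiagonalRep.isDensityRep (hm : IsDiagonalRep (rankOneSum ℂ c v) m η)
    (hc : ∀ j, 0 ≤ c j) (h : HasSum (fun j => c j * ‖v j‖ ^ 2) 1) : IsDensityRep m η := by
  refine ⟨fun n => ?_, hm.1.of_abs, ?_, hm.2.1⟩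
  · by_cases hn : m n = 0
    · exact hn.ge
    · exact hm.re_inner_apply_self hn ▸ re_inner_rankOneSum_nonneg h.summable hc (η n)
  · have htrace := hm.trFor_eq h.summable 1
    simpa only [trFor, one_apply_eq_self, ← RCLike.re_eq_complex_re, inner_self_eq_norm_sq,
      hm.2.1.mul_norm_sq, h.tsum_eq] using htrace

end DiagonalRep

theorem IsDensityRep.hasSum_mul_norm_sq {E : Type*} [NormedAddCommGroup E] [InnerProductSpace ℂ E]
    {p : ℕ → ℝ} {ζ : ℕ → E} (hp : IsDensityRep p ζ) : HasSum (fun n => p n * ‖ζ n‖ ^ 2) 1 := by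
  simpa only [hp.2.2.2.mul_norm_sq, hp.2.2.1] using hp.2.1.hasSum

theorem IsDensityRep.isDiagonalRep {p : ℕ → ℝ} {ζ : ℕ → H} (hp : IsDensityRep p ζ) :
    IsDiagonalRep (rankOneSum ℂ p ζ) p ζ :=
  ⟨hp.2.1.abs, hp.2.2.2, diagApply_eq_rankOneSum hp.hasSum_mul_norm_sq.summable⟩

section ConvexCombination

variable {p q : ℕ → ℝ} {ζ ξ : ℕ → H} {t : ℝ}

theorem IsDensityRep.exists_convexCombination (hp : IsDensityRep p ζ) (hq : IsDensityRep q ξ)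
    (ht₀ : 0 ≤ t) (ht₁ : t ≤ 1) :
    ∃ r χ, IsDensityRep r χ ∧
      IsDiagonalRep (((1 - t : ℝ) : ℂ) • rankOneSum ℂ p ζ + (t : ℂ) • rankOneSum ℂ q ξ) r χ ∧
      ∀ A, trFor A r χ = (1 - t) * trFor A p ζ + t * trFor A q ξ := by
  have hp' := hp.hasSum_mul_norm_sq
  have hq' := hq.hasSum_mul_norm_sq
  have hc : HasSum (fun j => Sum.elim ((1 - t) • p) (t • q) j * ‖Sum.elim ζ ξ j‖ ^ 2) 1 := by
    simpa using hasSum_sumElim_smul (g := fun x => ‖x‖ ^ 2) (1 - t) t hp' hq'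
  have hnonneg : ∀ j, 0 ≤ Sum.elim ((1 - t) • p) (t • q) j :=
    Sum.forall.mpr ⟨fun n => mul_nonneg (sub_nonneg.mpr ht₁) (hp.1 n),
      fun n => mul_nonneg ht₀ (hq.1 n)⟩
  obtain ⟨r, χ, hr, -⟩ := exists_isDiagonalRep hc.summable
  refine ⟨r, χ, hr.isDensityRep hnonneg hc, ?_, fun A => (hr.trFor_eq hc.summable A).trans ?_⟩
  · convert hr using 1
    exact (rankOneSum_sumElim hp'.summable hq'.summable (1 - t) t).symm
  · exact (hasSum_sumElim_smul (g := fun x => RCLike.re ⟪A x, x⟫_ℂ) (1 - t) t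
      (summable_mul_re_inner hp'.summable A).hasSum
      (summable_mul_re_inner hq'.summable A).hasSum).tsum_eq

theorem IsDensityRep.exists_isDiagonalRep_smul_sub (hp : IsDensityRep p ζ)
    (hq : IsDensityRep q ξ) (ht : 0 ≤ t) :
    ∃ m η, IsDiagonalRep ((t : ℂ) • (rankOneSum ℂ q ξ - rankOneSum ℂ p ζ)) m η ∧
      ∑' n, |m n| ≤ 2 * t := by
  have hp' := hp.hasSum_mul_norm_sq
  have hq' := hq.hasSum_mul_norm_sq
  have hd := (hasSum_sumElim_smul (g := fun x => ‖x‖ ^ 2) (-t) t hp' hq').summable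
  have habs (j : ℕ ⊕ ℕ) : |Sum.elim ((-t) • p) (t • q) j| = Sum.elim (t • p) (t • q) j := by
    rcases j with n | n
    · simp [abs_mul, abs_of_nonneg ht, abs_of_nonneg (hp.1 n)]
    · simp [abs_mul, abs_of_nonneg ht, abs_of_nonneg (hq.1 n)]
  have htsum : ∑' j, |Sum.elim ((-t) • p) (t • q) j| * ‖Sum.elim ζ ξ j‖ ^ 2 = 2 * t := by
    simpa only [habs, two_mul, smul_eq_mul, mul_one] using
      (hasSum_sumElim_smul (g := fun x => ‖x‖ ^ 2) t t hp' hq').tsum_eq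
  obtain ⟨m, η, hm, hle⟩ := exists_isDiagonalRep hd
  refine ⟨m, η, ?_, hle.trans_eq htsum⟩
  convert hm using 1
  rw [rankOneSum_sumElim hp'.summable hq'.summable, RCLike.ofReal_neg]
  module

theorem IsDensityRep.exists_near_convexCombination (hp : IsDensityRep p ζ)
    (hq : IsDensityRep q ξ) (ht₀ : 0 ≤ t) (ht₁ : t ≤ 1) :
    ∃ r χ m η, IsDensityRep r χ ∧ IsDiffRep r χ p ζ m η ∧ ∑' n, |m n| ≤ 2 * t ∧
      ∀ A, trFor A r χ = (1 - t) * trFor A p ζ + t * trFor A q ξ := by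
  obtain ⟨r, χ, hr, hdiag, htr⟩ := hp.exists_convexCombination hq ht₀ ht₁
  obtain ⟨m, η, hm, hle⟩ := hp.exists_isDiagonalRep_smul_sub hq ht₀
  refine ⟨r, χ, m, η, hr, IsDiagonalRep.isDiffRep ?_ hp.isDiagonalRep hdiag, hle, htr⟩
  convert hm using 1
  push_cast
  module

end ConvexCombination

section PureState

variable {E : Type*} [NormedAddCommGroup E] [InnerProductSpace ℂ E]

theorem isDensityRep_single {x : E} (hx : ‖x‖ = 1) :
    IsDensityRep (Pi.single 0 1) fun _ => x := by
  have hsum : HasSum (Pi.single 0 1 : ℕ → ℝ) 1 := hasSum_pi_single 0 1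
  refine ⟨fun n => ?_, hsum.summable, hsum.tsum_eq, fun m n hm hn => ?_⟩
  · exact (Pi.single_nonneg (α := fun _ => ℝ)).mpr zero_le_one n
  · have hzero {i : ℕ} (hi : (Pi.single 0 1 : ℕ → ℝ) i ≠ 0) : i = 0 := by
      by_contra h
      exact hi (Pi.single_eq_of_ne h 1)
    simp [hzero hm, hzero hn, inner_self_eq_norm_sq_to_K, hx]

theorem trFor_single (A : E →L[ℂ] E) (x : E) :
    trFor A (Pi.single 0 1) (fun _ => x) = RCLike.re ⟪A x, x⟫_ℂ := by
  rw [trFor, tsum_mul_right, tsum_pi_single, one_mul, RCLike.re_eq_complex_re]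

theorem isDiffRep_self (p : ℕ → ℝ) (ζ : ℕ → E) : IsDiffRep p ζ p ζ 0 0 :=
  ⟨by simp [summable_zero], by simp [OrthonormalOnSupport], by simp [diagApply]⟩

end PureState

theorem stmt9_general
    (A : H →L[ℂ] H) (hA : IsSelfAdjoint A) (k : ℝ)
    (p₀ : ℕ → ℝ) (ζ₀ : ℕ → H) (hρ₀ : IsDensityRep p₀ ζ₀)
    (ε : ℝ) (hε : 0 < ε)
    (hW : ∀ (q : ℕ → ℝ) (ξ : ℕ → H) (m : ℕ → ℝ) (η : ℕ → H),
      IsDensityRep q ξ → IsDiffRep q ξ p₀ ζ₀ m η → (∑' n, |m n|) < ε →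
      trFor A q ξ = k) :
    A = (k : ℂ) • (1 : H →L[ℂ] H) := by
  have hcenter : trFor A p₀ ζ₀ = k :=
    hW p₀ ζ₀ 0 0 hρ₀ (isDiffRep_self p₀ ζ₀) (by simpa using hε)
  refine eq_smul_one_of_forall_re_inner hA.isSymmetric fun x hx => ?_
  obtain ⟨t, ht₀, ht⟩ : ∃ t, 0 < t ∧ t < min 1 (ε / 2) := exists_between (by positivity)
  obtain ⟨ht₁, htε⟩ := lt_min_iff.mp ht
  obtain ⟨r, χ, m, η, hr, hm, hle, htr⟩ :=
    hρ₀.exists_near_convexCombination (isDensityRep_single hx) ht₀.le ht₁.le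
  have hmix : (1 - t) * k + t * RCLike.re ⟪A x, x⟫_ℂ = k := by
    rw [← hcenter, ← trFor_single, ← htr, hcenter, hW r χ m η hr hm (by linarith)]
  exact mul_left_cancel₀ ht₀.ne' (by linarith)

/-- Let `W` be a nonempty open subset of the space of density operators with
the trace-norm metric (so `W` contains a trace-norm ball of radius `ε > 0` around some density
operator `ρ₀`), and let `A` be a bounded self-adjoint operator with `Tr(ρ A) = k` for all
`ρ ∈ W`, where `k` is a real constant.  Then `A = k ⬝ I`. -/
theorem stmt9 [TopologicalSpace.SeparableSpace H]
    (A : H →L[ℂ] H) (hA : IsSelfAdjoint A) (k : ℝ)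
    (p₀ : ℕ → ℝ) (ζ₀ : ℕ → H) (hρ₀ : IsDensityRep p₀ ζ₀)
    (ε : ℝ) (hε : 0 < ε)
    (hW : ∀ (q : ℕ → ℝ) (ξ : ℕ → H) (m : ℕ → ℝ) (η : ℕ → H),
      IsDensityRep q ξ → IsDiffRep q ξ p₀ ζ₀ m η → (∑' n, |m n|) < ε →
      trFor A q ξ = k) :
    A = (k : ℂ) • (1 : H →L[ℂ] H) :=
  stmt9_general A hA k p₀ ζ₀ hρ₀ ε hε hW
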